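/- For any random vectors g ∈ L²(Ω, ℝᵐ) and h ∈ L²(Ω, ℝⁿ), the cross-covariance and covariance matrices satisfy 𝔼_{gh} 𝔼_{hh}^† 𝔼_{hh} = 𝔼_{gh}, where 𝔼_{hh}^† is the Moore–Penrose pseudoinverse of the covariance matrix 𝔼_{hh}. -/

import Mathlib

/-!
Let `C` be the covariance matrix of `h`. If `C v = 0`, then `vᵀ h` has variance `vᵀ C v = 0`, so it
is almost surely equal to its mean and is uncorrelated with every component of `g`; thus the kernel
of `C` is contained in that of `cov μ g h` (`cov_mulVec_eq_zero`). Since `C P C = C`, the columns of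
`P C - 1` lie in the kernel of `C`, hence are killed by `cov μ g h`, which is the claim.
-/

open MeasureTheory Matrix BigOperators

noncomputable def vmean {Ω : Type*} [MeasurableSpace Ω] {n : ℕ} (μ : Measure Ω)
    (g : Ω → Fin n → ℝ) : Fin n → ℝ :=
  fun i => ∫ ω, g ω i ∂μ

/-- Cross-covariance matrix `𝔼_{gh} = E[g hᵀ] - E[g] E[h]ᵀ`. -/
noncomputable def cov {Ω : Type*} [MeasurableSpace Ω] {m n : ℕ} (μ : Measure Ω)
    (g : Ω → Fin m → ℝ) (h : Ω → Fin n → ℝ) : Matrix (Fin m) (Fin n) ℝ :=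
  Matrix.of fun i j => (∫ ω, g ω i * h ω j ∂μ) - (∫ ω, g ω i ∂μ) * (∫ ω, h ω j ∂μ)

/-- `g ∈ L²(Ω, ℝⁿ)`: measurable with `E[‖g‖²] < ∞`. -/
def MemL2 {Ω : Type*} [MeasurableSpace Ω] {n : ℕ} (μ : Measure Ω)
    (g : Ω → Fin n → ℝ) : Prop :=
  Measurable g ∧ Integrable (fun ω => ∑ i, (g ω i) ^ 2) μ

/-- `P` is the Moore–Penrose pseudoinverse of `M`. -/
def IsMP {m n : ℕ} (M : Matrix (Fin m) (Fin n) ℝ) (P : Matrix (Fin n) (Fin m) ℝ) : Prop :=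
  M * P * M = M ∧ P * M * P = P ∧ (M * P)ᵀ = M * P ∧ (P * M)ᵀ = P * M

theorem MemL2.memLp {Ω : Type*} [MeasurableSpace Ω] {μ : Measure Ω} {n : ℕ}
    {g : Ω → Fin n → ℝ} (hg : MemL2 μ g) (i : Fin n) : MemLp (fun ω => g ω i) 2 μ := by
  have hm : Measurable fun ω => g ω i := (measurable_pi_apply i).comp hg.1
  rw [memLp_two_iff_integrable_sq hm.aestronglyMeasurable]
  refine hg.2.mono' (hm.pow_const 2).aestronglyMeasurable (Filter.Eventually.of_forall fun ω => ?_)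
  rw [Real.norm_of_nonneg (sq_nonneg _)]
  exact Finset.single_le_sum (f := fun j => g ω j ^ 2) (fun j _ => sq_nonneg _)
    (Finset.mem_univ i)

theorem cov_apply_eq_covariance {Ω : Type*} [MeasurableSpace Ω] {μ : Measure Ω}
    [IsProbabilityMeasure μ] {m n : ℕ} {g : Ω → Fin m → ℝ} {h : Ω → Fin n → ℝ}
    (hg : MemL2 μ g) (hh : MemL2 μ h) (i : Fin m) (j : Fin n) :
    cov μ g h i j = ProbabilityTheory.covariance (fun ω => g ω i) (fun ω => h ω j) μ := by
  rw [ProbabilityTheory.covariance_eq_sub (hg.memLp i) (hh.memLp j)]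
  rfl

/-- Covariance is linear in its second argument: `cov(X, vᵀ h) = ∑ⱼ cov(X, hⱼ) vⱼ`. -/
theorem covariance_linearCombination {Ω : Type*} [MeasurableSpace Ω] {μ : Measure Ω}
    [IsProbabilityMeasure μ] {n : ℕ} {X : Ω → ℝ} {h : Ω → Fin n → ℝ}
    (hX : MemLp X 2 μ) (hh : MemL2 μ h) (v : Fin n → ℝ) :
    ProbabilityTheory.covariance X (fun ω => ∑ j, h ω j * v j) μ =
      ∑ j, ProbabilityTheory.covariance X (fun ω => h ω j) μ * v j := by
  rw [ProbabilityTheory.covariance_fun_sum_right (X := fun j ω => h ω j * v j)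
    (fun j => (hh.memLp j).mul_const (v j)) hX]
  simp only [ProbabilityTheory.covariance_mul_const_right]

/-- The kernel of the covariance matrix of `h` is contained in the kernel of every cross-covariance
matrix with `h`. -/
theorem cov_mulVec_eq_zero {Ω : Type*} [MeasurableSpace Ω] {μ : Measure Ω}
    [IsProbabilityMeasure μ] {m n : ℕ} {g : Ω → Fin m → ℝ} {h : Ω → Fin n → ℝ}
    (hg : MemL2 μ g) (hh : MemL2 μ h) {v : Fin n → ℝ} (hv : cov μ h h *ᵥ v = 0) :
    cov μ g h *ᵥ v = 0 := by
  set Z : Ω → ℝ := fun ω => ∑ j, h ω j * v j with hZ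
  have hZL : MemLp Z 2 μ := memLp_finsetSum _ fun j _ => (hh.memLp j).mul_const (v j)
  have hhZ (k : Fin n) : ProbabilityTheory.covariance (fun ω => h ω k) Z μ = 0 := by
    rw [hZ, covariance_linearCombination (hh.memLp k) hh]
    simpa only [Matrix.mulVec, dotProduct, cov_apply_eq_covariance hh hh, Pi.zero_apply]
      using congrFun hv k
  have hvar : ProbabilityTheory.variance Z μ = 0 := by
    rw [← ProbabilityTheory.covariance_self hZL.aemeasurable]
    conv_lhs => arg 2; rw [hZ]
    rw [covariance_linearCombination hZL hh]
    refine Finset.sum_eq_zero fun k _ => ?_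
    rw [ProbabilityTheory.covariance_comm, hhZ, zero_mul]
  have hconst := ProbabilityTheory.ae_eq_integral_of_variance_eq_zero hZL hvar
  funext i
  have hgZ : ProbabilityTheory.covariance (fun ω => g ω i) Z μ = 0 := by
    refine integral_eq_zero_of_ae ?_
    filter_upwards [hconst] with ω hω
    simp [hω]
  rw [hZ, covariance_linearCombination (hg.memLp i) hh] at hgZ
  simpa only [Matrix.mulVec, dotProduct, cov_apply_eq_covariance hg hh, Pi.zero_apply] using hgZ

theorem cov_pinv_cov
    {Ω : Type*} [MeasurableSpace Ω] (μ : Measure Ω) [IsProbabilityMeasure μ]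
    {m n : ℕ} (g : Ω → Fin m → ℝ) (h : Ω → Fin n → ℝ)
    (hg : MemL2 μ g) (hh : MemL2 μ h)
    (P : Matrix (Fin n) (Fin n) ℝ) (hP : IsMP (cov μ h h) P) :
    cov μ g h * P * cov μ h h = cov μ g h := by
  have hker : cov μ h h * (P * cov μ h h - 1) = 0 := by
    rw [Matrix.mul_sub, ← Matrix.mul_assoc, hP.1, Matrix.mul_one, sub_self]
  have hzero : cov μ g h * (P * cov μ h h - 1) = 0 := by
    ext i j
    exact congrFun (cov_mulVec_eq_zero hg hh (v := fun k => (P * cov μ h h - 1) k j)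
      (funext fun k => congrFun (congrFun hker k) j)) i
  rw [Matrix.mul_sub, ← Matrix.mul_assoc, Matrix.mul_one] at hzero
  exact sub_eq_zero.mp hzero
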